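/- Let M^n be a complete Riemannian manifold isometrically immersed in Euclidean space ℝ^{n+k}, with second fundamental form α and nullity distribution 𝒩_p = {v ∈ T_pM : α(v, w) = 0 for all w ∈ T_pM}. Let μ be the minimal value of dim 𝒩_p over M. Then through every point p with dim 𝒩_p = μ, the maximal integral manifold of 𝒩 is an open subset of an affine subspace p + 𝒩_p of ℝ^{n+k} which, being complete, is the whole affine subspace; in particular M contains the full μ-dimensional affine subspace p + 𝒩_p through each such point p. -/

import Mathlib

noncomputable section

open Set

/-- The three model space forms: Euclidean space, the round sphere, hyperbolic space. -/
inductive SpaceFormKind : Type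
  | euclidean : SpaceFormKind
  | sphere : SpaceFormKind
  | hyperbolic : SpaceFormKind

/-- The sign of the `i`-th coordinate in the ambient bilinear form: for the hyperbolic case the
ambient linear space is the Lorentz space `ℝ^{D-1,1}` whose last coordinate is timelike. -/
def formSign (k : SpaceFormKind) (D : ℕ) (i : Fin D) : ℝ :=
  match k with
  | .hyperbolic => if (i : ℕ) + 1 = D then -1 else 1
  | _ => 1

/-- The ambient bilinear form: the Euclidean inner product in the euclidean and spherical cases,
the Lorentz (Minkowski) form in the hyperbolic case. -/
def aForm (k : SpaceFormKind) {D : ℕ} (x y : EuclideanSpace ℝ (Fin D)) : ℝ :=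
  ∑ i, formSign k D i * x i * y i

/-- The space form, realized inside its ambient linear space: all of `ℝ^D`, the unit sphere,
or the hyperboloid model of hyperbolic space in Lorentz space. -/
def spaceForm (k : SpaceFormKind) (D : ℕ) : Set (EuclideanSpace ℝ (Fin D)) :=
  match k with
  | .euclidean => Set.univ
  | .sphere => {x | aForm .sphere x x = 1}
  | .hyperbolic => {x | aForm .hyperbolic x x = -1 ∧ ∀ i : Fin D, (i : ℕ) + 1 = D → 0 < x i}

/-- The normal space of the space form itself inside the ambient linear space at a point `p`:
trivial in the euclidean case, and spanned by the position vector in the other two cases. -/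
def radialAt (k : SpaceFormKind) {D : ℕ} (p : EuclideanSpace ℝ (Fin D)) :
    Submodule ℝ (EuclideanSpace ℝ (Fin D)) :=
  match k with
  | .euclidean => ⊥
  | _ => Submodule.span ℝ {p}

/-- The tangent space of a subset `S ⊆ ℝ^D` at `p`: the span of all velocities at `0` of smooth
curves inside `S` passing through `p` at time `0`. -/
def TangentAt {D : ℕ} (S : Set (EuclideanSpace ℝ (Fin D))) (p : EuclideanSpace ℝ (Fin D)) :
    Submodule ℝ (EuclideanSpace ℝ (Fin D)) :=
  Submodule.span ℝ {v | ∃ c : ℝ → EuclideanSpace ℝ (Fin D),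
    ContDiff ℝ (⊤ : ℕ∞) c ∧ (∀ t, c t ∈ S) ∧ c 0 = p ∧ deriv c 0 = v}

/-- `φ : U → ℝ^D` is a (smooth, embedded) local parametrization of `S` around `p`. -/
structure IsLocalParam {D : ℕ} (S : Set (EuclideanSpace ℝ (Fin D))) (n : ℕ)
    (φ : EuclideanSpace ℝ (Fin n) → EuclideanSpace ℝ (Fin D))
    (U : Set (EuclideanSpace ℝ (Fin n))) (p : EuclideanSpace ℝ (Fin D)) : Prop where
  isOpen : IsOpen U
  smooth : ContDiffOn ℝ (⊤ : ℕ∞) φ U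
  immersion : ∀ x ∈ U, Function.Injective (fderivWithin ℝ φ U x)
  injOn : Set.InjOn φ U
  openImage : ∃ V, IsOpen V ∧ φ '' U = S ∩ V
  mem : p ∈ φ '' U
  embedding : ∃ ψ, ContinuousOn ψ (φ '' U) ∧ ∀ x ∈ U, ψ (φ x) = x

/-- `S ⊆ ℝ^D` is an `n`-dimensional smooth embedded submanifold. -/
def IsSubmanifold {D : ℕ} (S : Set (EuclideanSpace ℝ (Fin D))) (n : ℕ) : Prop :=
  ∀ p ∈ S, ∃ φ U, IsLocalParam S n φ U p

/-- The nullity space at `p` of the second fundamental form `α` of `S`, viewed as a submanifold of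
the space form of kind `k`:  a tangent vector `v` is in the nullity iff `α(v, w) = 0` for all
`w ∈ T_pS`; concretely, iff for every smooth tangent vector field `W` along a smooth curve `c` in
`S` with `c(0) = p`, `c'(0) = v`, the derivative `W'(0)` has no component normal to `S` inside the
space form, i.e. `W'(0)` lies in the sum of `T_pS` and the normal space of the space form itself. -/
def nullityAt (k : SpaceFormKind) {D : ℕ} (S : Set (EuclideanSpace ℝ (Fin D)))
    (p : EuclideanSpace ℝ (Fin D)) : Set (EuclideanSpace ℝ (Fin D)) :=
  {v | v ∈ TangentAt S p ∧ ∀ c W : ℝ → EuclideanSpace ℝ (Fin D),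
    ContDiff ℝ (⊤ : ℕ∞) c → (∀ t, c t ∈ S) → c 0 = p → deriv c 0 = v →
    ContDiff ℝ (⊤ : ℕ∞) W → (∀ t, W t ∈ TangentAt S (c t)) →
    deriv W 0 ∈ TangentAt S p ⊔ radialAt k p}

/-- The index of nullity of `S` at `p`. -/
def nullityIndex (k : SpaceFormKind) {D : ℕ} (S : Set (EuclideanSpace ℝ (Fin D)))
    (p : EuclideanSpace ℝ (Fin D)) : ℕ :=
  Set.finrank ℝ (nullityAt k S p)

/-- `γ : ℝ → ℝ^D` is a geodesic of the Riemannian (resp. Lorentzian-induced) submanifold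
`S` of the space form of kind `k`: a smooth curve in `S` whose acceleration is orthogonal,
with respect to the ambient bilinear form, to all tangent spaces of `S`. -/
structure IsGeodesicOn (k : SpaceFormKind) {D : ℕ} (S : Set (EuclideanSpace ℝ (Fin D)))
    (γ : ℝ → EuclideanSpace ℝ (Fin D)) : Prop where
  smooth : ContDiff ℝ (⊤ : ℕ∞) γ
  mem : ∀ t, γ t ∈ S
  accel_normal : ∀ t, ∀ v ∈ TangentAt S (γ t), aForm k (deriv (deriv γ) t) v = 0

/-- `S` is a (geodesically, equivalently metrically) complete Riemannian manifold: every
initial condition gives rise to a geodesic defined on all of `ℝ`. -/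
def GeodComplete (k : SpaceFormKind) {D : ℕ} (S : Set (EuclideanSpace ℝ (Fin D))) : Prop :=
  ∀ p ∈ S, ∀ v ∈ TangentAt S p, ∃ γ, IsGeodesicOn k S γ ∧ γ 0 = p ∧ deriv γ 0 = v

/-- The set of points of `S` where the index of nullity is minimal. -/
def minNullitySet (k : SpaceFormKind) {D : ℕ} (S : Set (EuclideanSpace ℝ (Fin D))) :
    Set (EuclideanSpace ℝ (Fin D)) :=
  {q | q ∈ S ∧ ∀ r ∈ S, nullityIndex k S q ≤ nullityIndex k S r}

/-- The maximal integral manifold (leaf) through `p` of the nullity distribution of `S`,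
restricted to the subset `A`: all points reachable from `p` by smooth curves inside `A`
everywhere tangent to the nullity distribution. -/
def leafThrough (k : SpaceFormKind) {D : ℕ} (S A : Set (EuclideanSpace ℝ (Fin D)))
    (p : EuclideanSpace ℝ (Fin D)) : Set (EuclideanSpace ℝ (Fin D)) :=
  {q | ∃ c : ℝ → EuclideanSpace ℝ (Fin D), ContDiff ℝ (⊤ : ℕ∞) c ∧ (∀ t, c t ∈ A) ∧
    (∀ t, deriv c t ∈ nullityAt k S (c t)) ∧ c 0 = p ∧ c 1 = q}

/-- The dimension of the ambient linear space: `n + k` for a submanifold `M^n ⊆ ℝ^{n+k}`,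
`n + k + 1` for `M^n ⊆ S^{n+k} ⊆ ℝ^{n+k+1}` and for `M^n ⊆ H^{n+k} ⊆ ℝ^{n+k,1}`. -/
def ambientDim (k : SpaceFormKind) (n codim : ℕ) : ℕ :=
  match k with
  | .euclidean => n + codim
  | _ => n + codim + 1


open scoped Topology ContDiff


/-- Shorthand for the ambient space. -/
abbrev Eu (D : ℕ) := EuclideanSpace ℝ (Fin D)

/-- A smooth local retraction onto `S`. -/
structure Retr {D : ℕ} (S : Set (Eu D)) (R : Eu D → Eu D) (O : Set (Eu D)) : Prop where
  isOpen : IsOpen O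
  smooth : ContDiffOn ℝ ∞ R O
  maps : ∀ x ∈ O, R x ∈ S
  fix : ∀ x ∈ S, x ∈ O → R x = x

theorem exists_retr {D n : ℕ} {S : Set (Eu D)} (hsub : IsSubmanifold S n) {q : Eu D} (hq : q ∈ S) :
    ∃ R O, q ∈ O ∧ Retr S R O := by
  obtain ⟨φ, U, hU⟩ := hsub q hq
  obtain ⟨u0, hu0, rfl⟩ := hU.mem
  have hsm : ∀ u ∈ U, ContDiffAt ℝ ∞ φ u := fun u hu => hU.smooth.contDiffAt (hU.isOpen.mem_nhds hu)
  have hinj : Function.Injective (fderiv ℝ φ u0) := by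
    have := hU.immersion u0 hu0
    rwa [fderivWithin_of_isOpen hU.isOpen hu0] at this
  obtain ⟨L, hL⟩ := LinearMap.exists_leftInverse_of_injective (fderiv ℝ φ u0 : Eu n →ₗ[ℝ] Eu D)
    (LinearMap.ker_eq_bot.2 hinj)
  let Lc : Eu D →L[ℝ] Eu n := LinearMap.toContinuousLinearMap L
  have hLc : Lc ∘L fderiv ℝ φ u0 = ContinuousLinearMap.id ℝ (Eu n) := by
    ext1 x; exact LinearMap.congr_fun hL x
  let g : Eu n → Eu n := fun u => Lc (φ u)
  have hg : ∀ u ∈ U, ContDiffAt ℝ ∞ g u := fun u hu => Lc.contDiff.contDiffAt.comp u (hsm u hu)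
  have hgd : ∀ u ∈ U, HasFDerivAt g (Lc ∘L fderiv ℝ φ u) u := fun u hu =>
    Lc.hasFDerivAt.comp u ((hsm u hu).differentiableAt (by simp)).hasFDerivAt
  have hg0 : HasFDerivAt g ((ContinuousLinearEquiv.refl ℝ (Eu n) : Eu n ≃L[ℝ] Eu n) : Eu n →L[ℝ] Eu n) u0 := by
    have := hgd u0 hu0
    rw [hLc] at this
    exact this
  let e := (hg u0 hu0).toOpenPartialHomeomorph g hg0 (by simp)
  have he : (e : Eu n → Eu n) = g := rfl
  have heu0 : u0 ∈ e.source := (hg u0 hu0).mem_toOpenPartialHomeomorph_source hg0 (by simp)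
  -- the good set of parameters
  have hcont : ContinuousOn (fun u => Lc ∘L fderiv ℝ φ u) U := by
    have := (hU.smooth.continuousOn_fderiv_of_isOpen hU.isOpen (by simp))
    exact continuousOn_const.clm_comp this
  have hopen : IsOpen {A : Eu n →L[ℝ] Eu n | IsUnit A} := Units.isOpen
  let U1 : Set (Eu n) := U ∩ (fun u => Lc ∘L fderiv ℝ φ u) ⁻¹' {A : Eu n →L[ℝ] Eu n | IsUnit A}
  have hU1 : IsOpen U1 := hcont.isOpen_inter_preimage hU.isOpen hopen
  have hu01 : u0 ∈ U1 := ⟨hu0, by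
    simp only [mem_preimage, mem_setOf_eq, hLc]; exact isUnit_one⟩
  -- open set
  let T1 : Set (Eu n) := e.target ∩ e.symm ⁻¹' U1
  have hT1 : IsOpen T1 := e.symm.isOpen_inter_preimage hU1
  have hsymm : ContDiffOn ℝ ∞ e.symm T1 := by
    intro y hy
    have hy2 : e.symm y ∈ U1 := hy.2
    obtain ⟨a, ha⟩ := hy2.2
    have h1 : HasFDerivAt g ((ContinuousLinearEquiv.ofUnit a : Eu n ≃L[ℝ] Eu n) : Eu n →L[ℝ] Eu n) (e.symm y) := by
      have := hgd _ hy2.1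
      have h3 : ((ContinuousLinearEquiv.ofUnit a : Eu n ≃L[ℝ] Eu n) : Eu n →L[ℝ] Eu n) = Lc ∘L fderiv ℝ φ (e.symm y) := by
        ext1 x; rw [← show _ = Lc ∘L fderiv ℝ φ (e.symm y) from ha]; rfl
      rw [h3]; exact this
    exact (e.contDiffAt_symm hy.1 h1 (hg _ hy2.1)).contDiffWithinAt
  obtain ⟨V, hV, hVeq⟩ := hU.openImage
  obtain ⟨ψ, hψ, hψφ⟩ := hU.embedding
  -- set where `ψ` lands in the source
  obtain ⟨O2, hO2, hO2eq⟩ := (continuousOn_iff'.1 hψ) e.source e.open_source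
  have hgu0 : Lc (φ u0) ∈ T1 := by
    refine ⟨e.map_source heu0, ?_⟩
    have : e.symm (e u0) = u0 := e.left_inv heu0
    show e.symm (g u0) ∈ U1
    rw [← he, this]; exact hu01
  refine ⟨fun x => φ (e.symm (Lc x)), (Lc ⁻¹' T1) ∩ V ∩ O2, ⟨⟨hgu0, ?_⟩, ?_⟩, ?_, ?_, ?_, ?_⟩
  · have : φ u0 ∈ S ∩ V := hVeq ▸ mem_image_of_mem φ hu0
    exact this.2
  · have : φ u0 ∈ ψ ⁻¹' e.source ∩ φ '' U := ⟨by simpa [hψφ u0 hu0] using heu0, mem_image_of_mem _ hu0⟩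
    rw [hO2eq] at this; exact this.1
  · exact ((hT1.preimage Lc.continuous).inter hV).inter hO2
  · refine hU.smooth.comp (hsymm.comp Lc.contDiff.contDiffOn ?_) ?_
    · intro x hx; exact hx.1.1
    · intro x hx
      have : e.symm (Lc x) ∈ U1 := hx.1.1.2
      exact this.1
  · intro x hx
    have : e.symm (Lc x) ∈ U1 := hx.1.1.2
    have h2 : φ (e.symm (Lc x)) ∈ S ∩ V := hVeq ▸ mem_image_of_mem φ this.1
    exact h2.1
  · intro x hxS hx
    have hx1 : x ∈ φ '' U := hVeq ▸ ⟨hxS, hx.1.2⟩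
    have hx2 : x ∈ ψ ⁻¹' e.source ∩ φ '' U := by rw [hO2eq]; exact ⟨hx.2, hx1⟩
    obtain ⟨u, hu, rfl⟩ := hx1
    have h3 : u ∈ e.source := by have := hx2.1; rwa [mem_preimage, hψφ u hu] at this
    show φ (e.symm (g u)) = φ u
    rw [← he, e.left_inv h3]

/-- A bounded smooth function with `ρ 0 = 0`, `ρ' 0 = 1`: a globally defined smooth curve staying
near `x` with velocity `v`. -/
theorem exists_small_curve {D : ℕ} {O : Set (Eu D)} (hO : IsOpen O) {x : Eu D} (hx : x ∈ O) (v : Eu D) :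
    ∃ c : ℝ → Eu D, ContDiff ℝ ∞ c ∧ (∀ t, c t ∈ O) ∧ c 0 = x ∧ HasDerivAt c v 0 := by
  obtain ⟨ε, hε, hball⟩ := Metric.isOpen_iff.1 hO x hx
  set δ : ℝ := ε / (2 * (‖v‖ + 1)) with hδ
  have hv : 0 ≤ ‖v‖ := norm_nonneg v
  have hδ0 : 0 < δ := by positivity
  refine ⟨fun t => x + (δ * Real.sin (t / δ)) • v, ?_, ?_, by simp, ?_⟩
  · fun_prop
  · intro t
    apply hball
    rw [mem_ball_iff_norm, add_sub_cancel_left, norm_smul, norm_mul, Real.norm_eq_abs, Real.norm_eq_abs,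
      abs_of_pos hδ0]
    have h1 : |Real.sin (t / δ)| ≤ 1 := Real.abs_sin_le_one _
    calc δ * |Real.sin (t / δ)| * ‖v‖ ≤ δ * 1 * ‖v‖ := by gcongr
      _ ≤ δ * (‖v‖ + 1) := by nlinarith
      _ = ε / 2 := by rw [hδ]; field_simp
      _ < ε := by linarith
  · have h1 : HasDerivAt (fun t : ℝ => δ * Real.sin (t / δ)) 1 0 := by
      have := (((hasDerivAt_id (0:ℝ)).div_const δ).sin).const_mul δ
      simpa [hδ0.ne'] using! this
    simpa using! (h1.smul_const v).const_add x

namespace Retr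
variable {D : ℕ} {S : Set (Eu D)} {R : Eu D → Eu D} {O : Set (Eu D)}

theorem contDiffAt (h : Retr S R O) {x : Eu D} (hx : x ∈ O) : ContDiffAt ℝ ∞ R x :=
  h.smooth.contDiffAt (h.isOpen.mem_nhds hx)

theorem hasFDerivAt (h : Retr S R O) {x : Eu D} (hx : x ∈ O) : HasFDerivAt R (fderiv ℝ R x) x :=
  ((h.contDiffAt hx).differentiableAt (by simp)).hasFDerivAt

/-- Curve in `S` with prescribed velocity. -/
theorem exists_curve (h : Retr S R O) {x : Eu D} (hxS : x ∈ S) (hx : x ∈ O) (w : Eu D) :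
    ∃ c : ℝ → Eu D, ContDiff ℝ ∞ c ∧ (∀ t, c t ∈ S ∩ O) ∧ c 0 = x ∧ HasDerivAt c (fderiv ℝ R x w) 0 := by
  have hO' : IsOpen (O ∩ R ⁻¹' O) := h.smooth.continuousOn.isOpen_inter_preimage h.isOpen h.isOpen
  obtain ⟨c, hc, hcO, hc0, hcd⟩ := exists_small_curve hO' (x := x) ⟨hx, by simpa [h.fix x hxS hx] using hx⟩ w
  refine ⟨R ∘ c, ?_, fun t => ⟨h.maps _ (hcO t).1, (hcO t).2⟩, by simp [hc0, h.fix x hxS hx], ?_⟩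
  · rw [contDiff_iff_contDiffAt]
    exact fun t => (h.contDiffAt (hcO t).1).comp t hc.contDiffAt
  · have h1 := h.hasFDerivAt hx
    rw [← hc0] at h1 ⊢
    exact h1.comp_hasDerivAt 0 hcd

/-- Velocity of a curve which is eventually in `S` is fixed by `DR`. -/
theorem fderiv_velocity (h : Retr S R O) {x : Eu D} (hx : x ∈ O) {c : ℝ → Eu D} {v : Eu D} {t : ℝ}
    (hc : HasDerivAt c v t) (hcS : ∀ᶠ s in 𝓝 t, c s ∈ S) (hc0 : c t = x) : fderiv ℝ R x v = v := by
  have h1 := h.hasFDerivAt hx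
  subst hc0
  have h2 := h1.comp_hasDerivAt t hc
  refine h2.unique (hc.congr_of_eventuallyEq ?_)
  filter_upwards [hcS, hc.continuousAt.preimage_mem_nhds (h.isOpen.mem_nhds hx)] with s hs hs'
  exact h.fix _ hs hs'

theorem tangent_iff (h : Retr S R O) {x : Eu D} (hxS : x ∈ S) (hx : x ∈ O) {v : Eu D} :
    v ∈ TangentAt S x ↔ fderiv ℝ R x v = v := by
  constructor
  · intro hv
    refine Submodule.span_induction ?_ (by simp) ?_ ?_ hv
    · rintro w ⟨c, hc, hcS, hc0, rfl⟩
      exact h.fderiv_velocity hx (hc.differentiable (by simp) 0).hasDerivAt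
        (Filter.Eventually.of_forall hcS) hc0
    · intro a b _ _ ha hb; rw [map_add, ha, hb]
    · intro a b _ hb; rw [map_smul, hb]
  · intro hv
    obtain ⟨c, hc, hcS, hc0, hcd⟩ := h.exists_curve hxS hx v
    rw [hv] at hcd
    exact Submodule.subset_span ⟨c, hc, fun t => (hcS t).1, hc0, hcd.deriv⟩

theorem fderiv_mem (h : Retr S R O) {x : Eu D} (hxS : x ∈ S) (hx : x ∈ O) (w : Eu D) :
    fderiv ℝ R x w ∈ TangentAt S x := by
  obtain ⟨c, hc, hcS, hc0, hcd⟩ := h.exists_curve hxS hx w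
  exact Submodule.subset_span ⟨c, hc, fun t => (hcS t).1, hc0, hcd.deriv⟩

theorem velocity_mem (h : Retr S R O) {x : Eu D} (hxS : x ∈ S) (hx : x ∈ O) {c : ℝ → Eu D} {v : Eu D} {t : ℝ}
    (hc : HasDerivAt c v t) (hcS : ∀ᶠ s in 𝓝 t, c s ∈ S) (hc0 : c t = x) : v ∈ TangentAt S x :=
  (h.tangent_iff hxS hx).2 (h.fderiv_velocity hx hc hcS hc0)

/-- Tangential derivatives of functions agreeing on `S`. -/
theorem fderiv_congr {G : Type*} [NormedAddCommGroup G] [NormedSpace ℝ G]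
    (h : Retr S R O) {x : Eu D} (hxS : x ∈ S) (hx : x ∈ O) {v : Eu D}
    (hv : v ∈ TangentAt S x) {f g : Eu D → G} {f' g' : Eu D →L[ℝ] G} (hf : HasFDerivAt f f' x)
    (hg : HasFDerivAt g g' x) {Q : Set (Eu D)} (hQ : IsOpen Q) (hxQ : x ∈ Q)
    (hfg : ∀ y ∈ S, y ∈ Q → f y = g y) : f' v = g' v := by
  have hR := h.hasFDerivAt hx
  have hfix := h.fix x hxS hx
  have h1 : HasFDerivAt (f ∘ R) (f' ∘L fderiv ℝ R x) x := by
    apply HasFDerivAt.comp _ _ hR; rwa [hfix]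
  have h2 : HasFDerivAt (g ∘ R) (g' ∘L fderiv ℝ R x) x := by
    apply HasFDerivAt.comp _ _ hR; rwa [hfix]
  have h3 : g ∘ R =ᶠ[𝓝 x] f ∘ R := by
    filter_upwards [h.isOpen.mem_nhds hx, hR.continuousAt.preimage_mem_nhds
      (hQ.mem_nhds (by rwa [hfix]))] with y hy hy'
    exact (hfg _ (h.maps y hy) hy').symm
  have h4 := DFunLike.congr_fun ((h1.congr_of_eventuallyEq h3).unique h2) v
  simpa [(h.tangent_iff hxS hx).1 hv] using h4
end Retr


theorem inner_adj {D : ℕ} (Z : Eu D →L[ℝ] Eu D) (x y : Eu D) : inner ℝ (star Z x) y = inner ℝ x (Z y) := by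
  rw [ContinuousLinearMap.star_eq_adjoint, ContinuousLinearMap.adjoint_inner_left]

theorem isUnit_of_inj {D : ℕ} {M : Eu D →L[ℝ] Eu D} (h : ∀ x, M x = 0 → x = 0) : IsUnit M := by
  rw [ContinuousLinearMap.isUnit_iff_isUnit_toLinearMap, LinearMap.isUnit_iff_ker_eq_bot]
  rw [Submodule.eq_bot_iff]
  exact fun x hx => h x hx

theorem isUnit_idem {D : ℕ} {Z : Eu D →L[ℝ] Eu D} (hZ : ∀ x, Z (Z x) = Z x) : IsUnit (Z + star Z - 1) := by
  apply isUnit_of_inj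
  intro x hx
  have hx' : x = Z x + star Z x := by
    have : Z x + star Z x - x = 0 := by simpa using hx
    exact (sub_eq_zero.1 this).symm
  have h1 : inner ℝ x (Z x) = inner ℝ (Z x) (Z x) + inner ℝ x (Z x) := by
    conv_lhs => rw [hx', ← hx']
    conv_lhs => arg 2; rw [hx']
    rw [inner_add_left, inner_adj, hZ]
  have h2 : Z x = 0 := by
    rw [← inner_self_eq_zero (𝕜 := ℝ)]; linarith
  have h3 : inner ℝ x x = inner ℝ (Z x) x + inner ℝ x (Z x) := by
    conv_lhs => arg 2; rw [hx']
    rw [inner_add_left, inner_adj]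
  rw [h2] at h3
  simpa using h3

theorem proj_formula {D : ℕ} {Z : Eu D →L[ℝ] Eu D} {K : Submodule ℝ (Eu D)} (h1 : ∀ v ∈ K, Z v = v)
    (h2 : ∀ v, Z v ∈ K) : IsUnit (Z + star Z - 1) ∧
      K.starProjection = Z * Ring.inverse (Z + star Z - 1) := by
  have hu := isUnit_idem (Z := Z) (fun x => h1 _ (h2 x))
  refine ⟨hu, ?_⟩
  have ha : K.starProjection * Z = Z := by
    ext1 x; exact Submodule.starProjection_eq_self_iff.2 (h2 x)
  have hb : Z * K.starProjection = K.starProjection := by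
    ext1 x; exact h1 _ (Submodule.starProjection_apply_mem _ _)
  have hs : star K.starProjection = K.starProjection := isSelfAdjoint_starProjection K
  have hc : K.starProjection * star Z = K.starProjection := by
    have := congrArg star hb
    rwa [star_mul, hs] at this
  have hd : K.starProjection * (Z + star Z - 1) = Z := by
    rw [mul_sub, mul_add, ha, hc]; simp
  have he := congrArg (fun A => A * Ring.inverse (Z + star Z - 1)) hd
  simp only [mul_assoc, Ring.mul_inverse_cancel _ hu, mul_one] at he
  exact he

theorem contDiffOn_ringInverse_comp {D : ℕ} {M : Eu D → Eu D →L[ℝ] Eu D} {O : Set (Eu D)}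
    (hO : IsOpen O) (hM : ContDiffOn ℝ ∞ M O) (hu : ∀ x ∈ O, IsUnit (M x)) :
    ContDiffOn ℝ ∞ (fun x => Ring.inverse (M x)) O := by
  intro x hx
  obtain ⟨a, ha⟩ := hu x hx
  have := contDiffAt_ringInverse ℝ (n := ∞) a
  rw [ha] at this
  exact (this.comp x (hM.contDiffAt (hO.mem_nhds hx))).contDiffWithinAt

theorem exists_smooth_proj {D : ℕ} {Z : Eu D → Eu D →L[ℝ] Eu D} {O : Set (Eu D)} (hO : IsOpen O)
    (hZ : ContDiffOn ℝ ∞ Z O) {K : Eu D → Submodule ℝ (Eu D)} {S : Set (Eu D)} {q : Eu D} (hq : q ∈ S)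
    (hqO : q ∈ O) (h : ∀ x ∈ S, x ∈ O → (∀ v ∈ K x, Z x v = v) ∧ ∀ v, Z x v ∈ K x) :
    ∃ O', O' ⊆ O ∧ IsOpen O' ∧ q ∈ O' ∧ ∃ Pt : Eu D → Eu D →L[ℝ] Eu D, ContDiffOn ℝ ∞ Pt O' ∧
      ∀ x ∈ S, x ∈ O' → Pt x = (K x).starProjection := by
  have hM : ContDiffOn ℝ ∞ (fun x => Z x + star (Z x) - 1) O := by
    have : ContDiffOn ℝ ∞ (fun x => star (Z x)) O :=
      (starL' ℝ : (Eu D →L[ℝ] Eu D) ≃L[ℝ] (Eu D →L[ℝ] Eu D)).contDiff.comp_contDiffOn hZ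
    exact (hZ.add this).sub contDiffOn_const
  have hopen : IsOpen (O ∩ (fun x => Z x + star (Z x) - 1) ⁻¹' {A | IsUnit A}) :=
    hM.continuousOn.isOpen_inter_preimage hO Units.isOpen
  refine ⟨_, inter_subset_left, hopen, ⟨hqO, ?_⟩, fun x => Z x * Ring.inverse (Z x + star (Z x) - 1), ?_, ?_⟩
  · exact (proj_formula (h q hq hqO).1 (h q hq hqO).2).1
  · exact (hZ.mono inter_subset_left).clm_comp (contDiffOn_ringInverse_comp hopen (hM.mono inter_subset_left) fun x hx => hx.2)
  · intro x hx hxO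
    exact (proj_formula (h x hx hxO.1).1 (h x hx hxO.1).2).2.symm

theorem exists_smooth_ker {D : ℕ} {G : Type*} [NormedAddCommGroup G] [NormedSpace ℝ G]
    [FiniteDimensional ℝ G] {B : Eu D → Eu D →L[ℝ] G} {O : Set (Eu D)} (hO : IsOpen O)
    (hB : ContDiffOn ℝ ∞ B O) {K : Eu D → Submodule ℝ (Eu D)} {S : Set (Eu D)} {q : Eu D} (hq : q ∈ S)
    (hqO : q ∈ O) (h : ∀ x ∈ S, x ∈ O → ∀ v, v ∈ K x ↔ B x v = 0) :
    ∃ O', O' ⊆ O ∧ IsOpen O' ∧ q ∈ O' ∧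
      (∀ x ∈ S, x ∈ O' → Module.finrank ℝ (K x) ≤ Module.finrank ℝ (K q)) ∧
      ∃ Z : Eu D → Eu D →L[ℝ] Eu D, ContDiffOn ℝ ∞ Z O' ∧
      ∀ x ∈ S, x ∈ O' → Module.finrank ℝ (K x) = Module.finrank ℝ (K q) →
        (∀ v ∈ K x, Z x v = v) ∧ ∀ v, Z x v ∈ K x := by
  let f : (K q)ᗮ →ₗ[ℝ] G := (B q : Eu D →ₗ[ℝ] G).domRestrict (K q)ᗮ
  have hf : LinearMap.ker f = ⊥ := by
    rw [Submodule.eq_bot_iff]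
    rintro ⟨x, hx⟩ hx0
    have h1 : x ∈ K q := (h q hq hqO x).2 hx0
    have h2 : inner ℝ x x = 0 := (Submodule.mem_orthogonal _ _).1 hx x h1
    simpa using h2
  obtain ⟨g, hg⟩ := LinearMap.exists_leftInverse_of_injective f hf
  let C : G →L[ℝ] Eu D := LinearMap.toContinuousLinearMap ((K q)ᗮ.subtype ∘ₗ g)
  set P0 := (K q).starProjection with hP0
  have hC : ∀ v, C (B q v) = v - P0 v := by
    intro v
    have h0 : B q (P0 v) = 0 := (h q hq hqO _).1 (Submodule.starProjection_apply_mem _ _)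
    have h1 : v - P0 v ∈ (K q)ᗮ := Submodule.sub_starProjection_mem_orthogonal v
    have h2 : B q v = f ⟨v - P0 v, h1⟩ := by
      show _ = B q (v - P0 v); rw [map_sub, h0, sub_zero]
    have h3 : g (f ⟨v - P0 v, h1⟩) = ⟨v - P0 v, h1⟩ := LinearMap.congr_fun hg _
    show ((g (B q v) : (K q)ᗮ) : Eu D) = _
    rw [h2, h3]
  let H : Eu D → Eu D →L[ℝ] Eu D := fun x => C ∘L B x + P0
  have hH : ContDiffOn ℝ ∞ H O := (contDiffOn_const.clm_comp hB).add contDiffOn_const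
  have hHq : H q = 1 := by ext1 v; simp [H, hC]
  have hopen : IsOpen (O ∩ H ⁻¹' {A | IsUnit A}) := hH.continuousOn.isOpen_inter_preimage hO Units.isOpen
  have hker : ∀ x ∈ S, x ∈ O → ∀ v ∈ K x, H x v = P0 v := by
    intro x hx hxO v hv
    simp [H, (h x hx hxO v).1 hv]
  have hinv : ∀ x, IsUnit (H x) → ∀ v, Ring.inverse (H x) (H x v) = v := fun x hx v =>
    DFunLike.congr_fun (Ring.inverse_mul_cancel _ hx) v
  have hle : ∀ x ∈ S, x ∈ O → (K x).map (H x : Eu D →ₗ[ℝ] Eu D) ≤ K q := by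
    rintro x hx hxO _ ⟨v, hv, rfl⟩
    show H x v ∈ _
    rw [hker x hx hxO v hv]
    exact Submodule.starProjection_apply_mem _ _
  have hfr : ∀ x, IsUnit (H x) → Module.finrank ℝ ((K x).map (H x : Eu D →ₗ[ℝ] Eu D)) = Module.finrank ℝ (K x) := by
    intro x hx
    exact (Submodule.equivMapOfInjective (H x : Eu D →ₗ[ℝ] Eu D)
      (Function.LeftInverse.injective (hinv x hx)) (K x)).finrank_eq.symm
  refine ⟨_, inter_subset_left, hopen, ⟨hqO, ?_⟩, ?_, fun x => Ring.inverse (H x) * P0, ?_, ?_⟩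
  · simp only [mem_preimage, hHq]; exact isUnit_one
  · intro x hx hxO
    rw [← hfr x hxO.2]
    exact Submodule.finrank_mono (hle x hx hxO.1)
  · exact (contDiffOn_ringInverse_comp hopen (hH.mono inter_subset_left) fun x hx => hx.2).clm_comp contDiffOn_const
  · intro x hx hxO heq
    refine ⟨fun v hv => ?_, fun v => ?_⟩
    · show Ring.inverse (H x) (P0 v) = v
      rw [← hker x hx hxO.1 v hv, hinv x hxO.2]
    · have h1 := Submodule.eq_of_le_of_finrank_eq (hle x hx hxO.1) ((hfr x hxO.2).trans heq)
      have h2 : P0 v ∈ (K x).map (H x : Eu D →ₗ[ℝ] Eu D) := h1 ▸ Submodule.starProjection_apply_mem _ _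
      obtain ⟨w, hw, hw2⟩ := h2
      show Ring.inverse (H x) (P0 v) ∈ K x
      rw [← hw2]
      show Ring.inverse (H x) (H x w) ∈ K x
      rw [hinv x hxO.2]; exact hw

/-- If `D` is the derivative of a curve of orthogonal projections and vanishes on the range of the
projection, it vanishes. -/
theorem proj_deriv_zero {D : ℕ} {P A : Eu D →L[ℝ] Eu D} (hA : ∀ x y, inner ℝ (A x) y = inner ℝ x (A y))
    (h : ∀ w, P (A w) + A (P w) = A w) (h0 : ∀ w, P w = w → A w = 0) (hP : ∀ w, P (P w) = P w) : A = 0 := by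
  have h1 : ∀ w, A (P w) = 0 := fun w => h0 _ (hP w)
  have h2 : ∀ w, P (A w) = A w := fun w => by simpa [h1] using h w
  ext1 w
  have : inner ℝ (A w) (A w) = 0 := by
    rw [hA, ← h2 w, h1, inner_zero_right]
  simpa using this


/-- Derivative of a field of orthogonal projections. -/
theorem Retr.proj_deriv {D : ℕ} {S : Set (Eu D)} {R : Eu D → Eu D} {O : Set (Eu D)}
    (h : Retr S R O) {x : Eu D} (hxS : x ∈ S) (hx : x ∈ O) {v : Eu D}
    (hv : v ∈ TangentAt S x) {P : Eu D → Eu D →L[ℝ] Eu D} {P' : Eu D →L[ℝ] Eu D →L[ℝ] Eu D}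
    (hP : HasFDerivAt P P' x) {Q : Set (Eu D)} (hQ : IsOpen Q) (hxQ : x ∈ Q)
    {K : Eu D → Submodule ℝ (Eu D)} (hK : ∀ y ∈ S, y ∈ Q → P y = (K y).starProjection) :
    (∀ a b, inner ℝ (P' v a) b = inner ℝ a (P' v b)) ∧
    (∀ w, P x (P' v w) + P' v (P x w) = P' v w) := by
  have hPa : ∀ a, HasFDerivAt (fun y => P y a) (P'.flip a) x := fun a => by
    simpa using hP.clm_apply (hasFDerivAt_const a x)
  constructor
  · intro a b
    have h1 : HasFDerivAt (fun y => inner ℝ (P y a) b) ((innerSL ℝ b) ∘L (P'.flip a)) x := by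
      have := (innerSL ℝ b).hasFDerivAt.comp x (hPa a)
      refine this.congr_of_eventuallyEq (Filter.Eventually.of_forall fun y => ?_)
      simp [real_inner_comm]
    have h2 : HasFDerivAt (fun y => inner ℝ a (P y b)) ((innerSL ℝ a) ∘L (P'.flip b)) x := by
      have := (innerSL ℝ a).hasFDerivAt.comp x (hPa b)
      exact this
    have h3 := h.fderiv_congr hxS hx hv h1 h2 hQ hxQ (fun y hy hyQ => by
      simp only [hK y hy hyQ]
      exact Submodule.inner_starProjection_left_eq_right _ _ _)
    simpa [real_inner_comm] using h3
  · intro w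
    have h1 := hP.clm_apply (hPa w)
    have h3 := h.fderiv_congr hxS hx hv h1 (hPa w) hQ hxQ (fun y hy hyQ => by
      simp only [hK y hy hyQ]
      exact Submodule.starProjection_eq_self_iff.2 (Submodule.starProjection_apply_mem _ _))
    simpa using h3

/-- Local retraction together with a smooth extension of the tangent projection. -/
structure Loc {D : ℕ} (S : Set (Eu D)) (R : Eu D → Eu D) (P : Eu D → Eu D →L[ℝ] Eu D)
    (O : Set (Eu D)) : Prop extends Retr S R O where
  smoothP : ContDiffOn ℝ ∞ P O
  P_eq : ∀ x ∈ S, x ∈ O → P x = (TangentAt S x).starProjection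

theorem exists_loc {D n : ℕ} {S : Set (Eu D)} (hsub : IsSubmanifold S n) {q : Eu D} (hq : q ∈ S) :
    ∃ R P O, q ∈ O ∧ Loc S R P O := by
  obtain ⟨R, O, hqO, hR⟩ := exists_retr hsub hq
  obtain ⟨O', hO'O, hO', hqO', P, hP, hPeq⟩ := exists_smooth_proj hR.isOpen (Z := fun x => fderiv ℝ R x)
    (hR.smooth.fderiv_of_isOpen hR.isOpen (by simp)) (K := TangentAt S) hq hqO
    (fun x hx hxO => ⟨fun v hv => (hR.tangent_iff hx hxO).1 hv, fun v => hR.fderiv_mem hx hxO v⟩)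
  exact ⟨R, P, O', hqO', ⟨hO', hR.smooth.mono hO'O, fun x hx => hR.maps x (hO'O hx),
    fun x hx hxO => hR.fix x hx (hO'O hxO)⟩, hP, hPeq⟩

namespace Loc
variable {D : ℕ} {S : Set (Eu D)} {R : Eu D → Eu D} {P : Eu D → Eu D →L[ℝ] Eu D} {O : Set (Eu D)}
  {x : Eu D}

theorem contDiffAtP (h : Loc S R P O) (hx : x ∈ O) : ContDiffAt ℝ ∞ P x :=
  h.smoothP.contDiffAt (h.isOpen.mem_nhds hx)

theorem hasFDerivAtP (h : Loc S R P O) (hx : x ∈ O) : HasFDerivAt P (fderiv ℝ P x) x :=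
  ((h.contDiffAtP hx).differentiableAt (by simp)).hasFDerivAt

theorem P_iff (h : Loc S R P O) (hxS : x ∈ S) (hx : x ∈ O) {v : Eu D} :
    P x v = v ↔ v ∈ TangentAt S x := by
  rw [h.P_eq x hxS hx]; exact Submodule.starProjection_eq_self_iff

theorem P_mem (h : Loc S R P O) (hxS : x ∈ S) (hx : x ∈ O) (v : Eu D) : P x v ∈ TangentAt S x := by
  rw [h.P_eq x hxS hx]; exact Submodule.starProjection_apply_mem _ _

theorem dP_symm (h : Loc S R P O) (hxS : x ∈ S) (hx : x ∈ O) {v : Eu D} (hv : v ∈ TangentAt S x) (a b : Eu D) :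
    inner ℝ (fderiv ℝ P x v a) b = inner ℝ a (fderiv ℝ P x v b) :=
  (h.toRetr.proj_deriv hxS hx hv (h.hasFDerivAtP hx) h.isOpen hx h.P_eq).1 a b

theorem dP_idem (h : Loc S R P O) (hxS : x ∈ S) (hx : x ∈ O) {v : Eu D} (hv : v ∈ TangentAt S x) (w : Eu D) :
    P x (fderiv ℝ P x v w) + fderiv ℝ P x v (P x w) = fderiv ℝ P x v w :=
  (h.toRetr.proj_deriv hxS hx hv (h.hasFDerivAtP hx) h.isOpen hx h.P_eq).2 w

/-- Symmetry of the second fundamental form. -/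
theorem dP_comm (h : Loc S R P O) (hxS : x ∈ S) (hx : x ∈ O) {v w : Eu D} (hv : v ∈ TangentAt S x)
    (hw : w ∈ TangentAt S x) : fderiv ℝ P x v w = fderiv ℝ P x w v := by
  have hR2 : HasFDerivAt (fderiv ℝ R) (fderiv ℝ (fderiv ℝ R) x) x :=
    (((h.contDiffAt hx).fderiv_right (m := 1) (by norm_cast)).differentiableAt (by simp)).hasFDerivAt
  have hs : IsSymmSndFDerivAt ℝ R x := (h.contDiffAt hx).isSymmSndFDerivAt (by simp; norm_cast)
  have hRa : ∀ a, HasFDerivAt (fun y => fderiv ℝ R y a) ((fderiv ℝ (fderiv ℝ R) x).flip a) x := fun a => by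
    simpa using hR2.clm_apply (hasFDerivAt_const a x)
  have key : ∀ v w : Eu D, v ∈ TangentAt S x → w ∈ TangentAt S x →
      P x (fderiv ℝ (fderiv ℝ R) x v w) + fderiv ℝ P x v w = fderiv ℝ (fderiv ℝ R) x v w := by
    intro v w hv hw
    have h1 := (h.hasFDerivAtP hx).clm_apply (hRa w)
    have h3 := h.toRetr.fderiv_congr hxS hx hv h1 (hRa w) h.isOpen hx (fun y hy hyO =>
      (h.P_iff hy hyO).2 (h.fderiv_mem hy hyO w))
    simpa [(h.tangent_iff hxS hx).1 hw] using h3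
  have h1 := key v w hv hw
  have h2 := key w v hw hv
  rw [hs.eq w v] at h2
  exact add_left_cancel (h1.trans h2.symm)

theorem nullity_iff (h : Loc S R P O) (hxS : x ∈ S) (hx : x ∈ O) {v : Eu D} :
    v ∈ nullityAt .euclidean S x ↔ v ∈ TangentAt S x ∧ fderiv ℝ P x v = 0 := by
  constructor
  · rintro ⟨hv, hv2⟩
    refine ⟨hv, ?_⟩
    obtain ⟨c, hc, hcS, hc0, hcd⟩ := h.exists_curve hxS hx v
    rw [(h.tangent_iff hxS hx).1 hv] at hcd
    apply proj_deriv_zero (h.dP_symm hxS hx hv) (h.dP_idem hxS hx hv)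
    · intro w hw
      have hPc : HasDerivAt (fun t => P (c t)) (fderiv ℝ P x v) 0 := by
        have := h.hasFDerivAtP hx
        rw [← hc0] at this ⊢
        exact this.comp_hasDerivAt 0 hcd
      have hW : HasDerivAt (fun t => P (c t) w) (fderiv ℝ P x v w) 0 := by
        simpa using hPc.clm_apply (hasDerivAt_const (0:ℝ) w)
      have h1 := hv2 c (fun t => P (c t) w) hc (fun t => (hcS t).1) hc0 hcd.deriv (by
        rw [contDiff_iff_contDiffAt]
        intro t
        exact ((h.contDiffAtP (hcS t).2).comp t hc.contDiffAt).clm_apply contDiffAt_const)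
        (fun t => h.P_mem (hcS t).1 (hcS t).2 w)
      rw [hW.deriv] at h1
      simp only [radialAt, sup_bot_eq] at h1
      have h2 := h.dP_idem hxS hx hv w
      rw [(h.P_iff hxS hx).2 h1, hw] at h2
      simpa using h2
    · intro w; exact (h.P_iff hxS hx).2 (h.P_mem hxS hx w)
  · rintro ⟨hv, hv2⟩
    refine ⟨hv, fun c W hc hcS hc0 hcd hW hWT => ?_⟩
    simp only [radialAt, sup_bot_eq]
    have hcd' : HasDerivAt c v 0 := by
      rw [← hcd]; exact (hc.differentiable (by simp) 0).hasDerivAt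
    have hWd : HasDerivAt W (deriv W 0) 0 := (hW.differentiable (by simp) 0).hasDerivAt
    have hPc : HasDerivAt (fun t => P (c t)) (fderiv ℝ P x v) 0 := by
      have := h.hasFDerivAtP hx
      rw [← hc0] at this ⊢
      exact this.comp_hasDerivAt 0 hcd'
    have h1 := hPc.clm_apply hWd
    have h2 : HasDerivAt (fun t => P (c t) (W t)) (deriv W 0) 0 := by
      refine hWd.congr_of_eventuallyEq ?_
      filter_upwards [hcd'.continuousAt.preimage_mem_nhds (h.isOpen.mem_nhds (by rwa [hc0]))] with t ht
      exact (h.P_iff (hcS t) ht).2 (hWT t)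
    have h3 := h1.unique h2
    rw [hv2, hc0] at h3
    exact (h.P_iff hxS hx).1 (by simpa using h3)
end Loc

/-- The nullity space as a submodule. -/
def Nul {D : ℕ} (S : Set (Eu D)) (x : Eu D) : Submodule ℝ (Eu D) :=
  Submodule.span ℝ (nullityAt .euclidean S x)

theorem Loc.mem_Nul {D : ℕ} {S : Set (Eu D)} {R : Eu D → Eu D} {P : Eu D → Eu D →L[ℝ] Eu D}
    {O : Set (Eu D)} {x : Eu D} (h : Loc S R P O) (hxS : x ∈ S) (hx : x ∈ O) {v : Eu D} :
    v ∈ Nul S x ↔ v ∈ TangentAt S x ∧ fderiv ℝ P x v = 0 := by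
  constructor
  · intro hv
    refine Submodule.span_induction (fun w hw => (h.nullity_iff hxS hx).1 hw) (by simp) ?_ ?_ hv
    · rintro a b _ _ ⟨ha, ha'⟩ ⟨hb, hb'⟩
      exact ⟨add_mem ha hb, by rw [map_add, ha', hb', add_zero]⟩
    · rintro a b _ ⟨hb, hb'⟩
      exact ⟨Submodule.smul_mem _ _ hb, by
        have h5 : fderiv ℝ P x (a • b) = a • fderiv ℝ P x b := map_smul _ _ _
        rw [h5, hb']; ext1 u; exact smul_zero (A := Eu D) a⟩
  · intro hv
    exact Submodule.subset_span ((h.nullity_iff hxS hx).2 hv)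

theorem mem_Nul_iff {D n : ℕ} {S : Set (Eu D)} (hsub : IsSubmanifold S n) {x : Eu D} (hxS : x ∈ S) {v : Eu D} :
    v ∈ Nul S x ↔ v ∈ nullityAt .euclidean S x := by
  obtain ⟨R, P, O, hx, h⟩ := exists_loc hsub hxS
  rw [h.mem_Nul hxS hx, h.nullity_iff hxS hx]

theorem mem_A_iff {D : ℕ} {S : Set (Eu D)} {x : Eu D} : x ∈ minNullitySet .euclidean S ↔
    x ∈ S ∧ ∀ r ∈ S, Module.finrank ℝ (Nul S x) ≤ Module.finrank ℝ (Nul S r) := Iff.rfl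

/-- Near a point of minimal nullity. `Π` is the smooth extension of the nullity projection. -/
structure LocN {D : ℕ} (S : Set (Eu D)) (R : Eu D → Eu D) (P N : Eu D → Eu D →L[ℝ] Eu D)
    (O : Set (Eu D)) : Prop extends Loc S R P O where
  smoothN : ContDiffOn ℝ ∞ N O
  N_eq : ∀ x ∈ S, x ∈ O → N x = (Nul S x).starProjection
  minN : ∀ x ∈ S, x ∈ O → x ∈ minNullitySet .euclidean S

theorem exists_locN {D n : ℕ} {S : Set (Eu D)} (hsub : IsSubmanifold S n) {q : Eu D}
    (hq : q ∈ minNullitySet .euclidean S) : ∃ R P N O, q ∈ O ∧ LocN S R P N O := by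
  have hqS : q ∈ S := hq.1
  obtain ⟨R, P, O, hqO, h⟩ := exists_loc hsub hqS
  have hB : ContDiffOn ℝ ∞ (fun x => ContinuousLinearMap.inl ℝ (Eu D) (Eu D →L[ℝ] Eu D) ∘L
      (ContinuousLinearMap.id ℝ (Eu D) - P x) + ContinuousLinearMap.inr ℝ (Eu D) (Eu D →L[ℝ] Eu D) ∘L (fderiv ℝ P x)) O := by
    have h1 : ContDiffOn ℝ ∞ (fun x => fderiv ℝ P x) O := h.smoothP.fderiv_of_isOpen h.isOpen (by simp)
    have h2 : ContDiffOn ℝ ∞ (fun x => ContinuousLinearMap.id ℝ (Eu D) - P x) O := contDiffOn_const.sub h.smoothP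
    exact (contDiffOn_const.clm_comp h2).add (contDiffOn_const.clm_comp h1)
  obtain ⟨O1, hO1O, hO1, hqO1, hle, Z, hZ, hZK⟩ := exists_smooth_ker h.isOpen hB (K := Nul S) hqS hqO
    (fun x hx hxO v => by
      rw [h.mem_Nul hx hxO, ← h.P_iff hx hxO]
      simp [Prod.ext_iff, sub_eq_zero, eq_comm (a := v)])
  have heq : ∀ x ∈ S, x ∈ O1 → Module.finrank ℝ (Nul S x) = Module.finrank ℝ (Nul S q) := fun x hx hxO =>
    le_antisymm (hle x hx hxO) (hq.2 x hx)
  obtain ⟨O2, hO2O, hO2, hqO2, N, hN, hNeq⟩ := exists_smooth_proj hO1 hZ (K := Nul S) hqS hqO1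
    (fun x hx hxO => hZK x hx hxO (heq x hx hxO))
  have hO : O2 ⊆ O := hO2O.trans hO1O
  refine ⟨R, P, N, O2, hqO2, ⟨⟨⟨hO2, h.smooth.mono hO, fun x hx => h.maps x (hO hx),
    fun x hx hxO => h.fix x hx (hO hxO)⟩, h.smoothP.mono hO, fun x hx hxO => h.P_eq x hx (hO hxO)⟩, hN, hNeq, ?_⟩⟩
  intro x hx hxO
  refine ⟨hx, fun r hr => ?_⟩
  have : nullityIndex .euclidean S x = nullityIndex .euclidean S q := heq x hx (hO2O hxO)
  rw [this]; exact hq.2 r hr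


namespace LocN
variable {D : ℕ} {S : Set (Eu D)} {R : Eu D → Eu D} {P N : Eu D → Eu D →L[ℝ] Eu D} {O : Set (Eu D)}
  {x : Eu D}

theorem contDiffAtN (h : LocN S R P N O) (hx : x ∈ O) : ContDiffAt ℝ ∞ N x :=
  h.smoothN.contDiffAt (h.isOpen.mem_nhds hx)

theorem hasFDerivAtN (h : LocN S R P N O) (hx : x ∈ O) : HasFDerivAt N (fderiv ℝ N x) x :=
  ((h.contDiffAtN hx).differentiableAt (by simp)).hasFDerivAt

theorem N_iff (h : LocN S R P N O) (hxS : x ∈ S) (hx : x ∈ O) {v : Eu D} :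
    N x v = v ↔ v ∈ Nul S x := by
  rw [h.N_eq x hxS hx]; exact Submodule.starProjection_eq_self_iff

theorem N_mem (h : LocN S R P N O) (hxS : x ∈ S) (hx : x ∈ O) (v : Eu D) : N x v ∈ Nul S x := by
  rw [h.N_eq x hxS hx]; exact Submodule.starProjection_apply_mem _ _

/-- The nullity distribution is parallel along itself. -/
theorem dN_zero (h : LocN S R P N O) (hxS : x ∈ S) (hx : x ∈ O) {n : Eu D} (hn : n ∈ Nul S x) :
    fderiv ℝ N x n = 0 := by
  have hnT := ((h.toLoc.mem_Nul hxS hx).1 hn).1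
  have hn0 := ((h.toLoc.mem_Nul hxS hx).1 hn).2
  obtain ⟨hsym, hidem⟩ := h.toRetr.proj_deriv hxS hx hnT (h.hasFDerivAtN hx) h.isOpen hx h.N_eq
  have hP := h.toLoc.hasFDerivAtP hx
  have hP2 : HasFDerivAt (fderiv ℝ P) (fderiv ℝ (fderiv ℝ P) x) x :=
    (((h.toLoc.contDiffAtP hx).fderiv_right (m := 1) (by norm_cast)).differentiableAt (by simp)).hasFDerivAt
  have hs : IsSymmSndFDerivAt ℝ P x := (h.toLoc.contDiffAtP hx).isSymmSndFDerivAt (by simp; norm_cast)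
  have hNa : ∀ a, HasFDerivAt (fun y => N y a) ((fderiv ℝ N x).flip a) x := fun a => by
    simpa using (h.hasFDerivAtN hx).clm_apply (hasFDerivAt_const a x)
  have hPa : ∀ a, HasFDerivAt (fun y => P y a) ((fderiv ℝ P x).flip a) x := fun a => by
    simpa using hP.clm_apply (hasFDerivAt_const a x)
  apply proj_deriv_zero hsym hidem
  · intro y hy
    have hyN : y ∈ Nul S x := (h.N_iff hxS hx).1 hy
    have hyT := ((h.toLoc.mem_Nul hxS hx).1 hyN).1
    have hy0 := ((h.toLoc.mem_Nul hxS hx).1 hyN).2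
    have e1 : ∀ w ∈ TangentAt S x, fderiv ℝ N x w y ∈ TangentAt S x := by
      intro w hw
      have h1 := hP.clm_apply (hNa y)
      have h3 := h.toRetr.fderiv_congr hxS hx hw h1 (hNa y) h.isOpen hx (fun z hz hzO =>
        (h.toLoc.P_iff hz hzO).2 ((h.toLoc.mem_Nul hz hzO).1 (h.N_mem hz hzO y)).1)
      have h4 : fderiv ℝ P x w y = 0 := by
        rw [h.toLoc.dP_comm hxS hx hw hyT, hy0]; rfl
      rw [← h.toLoc.P_iff hxS hx]
      simpa [hy, h4] using h3
    have e2 : ∀ w ∈ TangentAt S x, fderiv ℝ P x (fderiv ℝ N x w y) + fderiv ℝ (fderiv ℝ P) x w y = 0 := by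
      intro w hw
      have h1 := hP2.clm_apply (hNa y)
      have h3 := h.toRetr.fderiv_congr hxS hx hw h1 (hasFDerivAt_const 0 x) h.isOpen hx (fun z hz hzO =>
        ((h.toLoc.mem_Nul hz hzO).1 (h.N_mem hz hzO y)).2)
      simpa [hy] using h3
    have e3 : ∀ a ∈ TangentAt S x, ∀ b ∈ TangentAt S x,
        fderiv ℝ (fderiv ℝ P) x y a b = fderiv ℝ (fderiv ℝ P) x y b a := by
      intro a ha b hb
      have h1 := (hP2.clm_apply (hPa a)).clm_apply (hPa b)
      have h2 := (hP2.clm_apply (hPa b)).clm_apply (hPa a)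
      have h3 := h.toRetr.fderiv_congr hxS hx hyT h1 h2 h.isOpen hx (fun z hz hzO =>
        h.toLoc.dP_comm hz hzO (h.toLoc.P_mem hz hzO a) (h.toLoc.P_mem hz hzO b))
      simpa [hy0, (h.toLoc.P_iff hxS hx).2 ha, (h.toLoc.P_iff hxS hx).2 hb] using h3
    have hAT := e1 n hnT
    have e4 : fderiv ℝ P x (fderiv ℝ N x n y) = 0 := by
      apply proj_deriv_zero (h.toLoc.dP_symm hxS hx hAT) (h.toLoc.dP_idem hxS hx hAT)
      · intro b hb
        have hbT := (h.toLoc.P_iff hxS hx).1 hb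
        have h1 := DFunLike.congr_fun (e2 n hnT) b
        have h2 := DFunLike.congr_fun (e2 b hbT) n
        have h3 := e3 n hnT b hbT
        have h4 : fderiv ℝ P x (fderiv ℝ N x b y) n = 0 := by
          rw [h.toLoc.dP_comm hxS hx (e1 b hbT) hnT, hn0]; rfl
        simp only [add_apply, zero_apply, h4, zero_add] at h1 h2
        rw [hs.eq n y, h3, hs.eq y b, h2, add_zero] at h1
        exact h1
      · intro w; exact (h.toLoc.P_iff hxS hx).2 (h.toLoc.P_mem hxS hx w)
    have hAN : fderiv ℝ N x n y ∈ Nul S x := (h.toLoc.mem_Nul hxS hx).2 ⟨hAT, e4⟩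
    have h5 := hidem y
    rw [(h.N_iff hxS hx).2 hAN, hy] at h5
    simpa using h5
  · intro w; exact (h.N_iff hxS hx).2 (h.N_mem hxS hx w)

end LocN

section
variable {D m : ℕ} {S : Set (Eu D)}

theorem mem_T_of_mem_Nul (hsub : IsSubmanifold S m) {x v : Eu D} (hx : x ∈ S) (hv : v ∈ Nul S x) :
    v ∈ TangentAt S x := by
  obtain ⟨R, P, O, hxO, h⟩ := exists_loc hsub hx
  exact ((h.mem_Nul hx hxO).1 hv).1

theorem isOpen_A (hsub : IsSubmanifold S m) : ∃ O, IsOpen O ∧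
    ∀ x ∈ S, x ∈ minNullitySet .euclidean S ↔ x ∈ O := by
  refine ⟨⋃₀ {O | IsOpen O ∧ ∀ x ∈ S, x ∈ O → x ∈ minNullitySet .euclidean S},
    isOpen_sUnion fun O hO => hO.1, fun x hx => ⟨fun hxA => ?_, ?_⟩⟩
  · obtain ⟨R, P, N, O, hxO, h⟩ := exists_locN hsub hxA
    exact ⟨O, ⟨h.isOpen, h.minN⟩, hxO⟩
  · rintro ⟨O, hO, hxO⟩
    exact hO.2 x hx hxO

theorem continuousOn_PN (hsub : IsSubmanifold S m) :
    ContinuousOn (fun x => (Nul S x).starProjection) (minNullitySet .euclidean S) := by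
  intro x hx
  obtain ⟨R, P, N, O, hxO, h⟩ := exists_locN hsub hx
  refine (h.hasFDerivAtN hxO).continuousAt.continuousWithinAt.congr_of_eventuallyEq ?_ (h.N_eq x hx.1 hxO).symm
  filter_upwards [self_mem_nhdsWithin, mem_nhdsWithin_of_mem_nhds (h.isOpen.mem_nhds hxO)] with y hy hyO
  exact (h.N_eq y hy.1 hyO).symm

/-- Along curves tangent to the nullity, both projections are constant. -/
theorem const_along (hsub : IsSubmanifold S m) {c : ℝ → Eu D} {a b : ℝ} (hab : a ≤ b)
    (hc : Differentiable ℝ c) (hcA : ∀ t ∈ Icc a b, c t ∈ minNullitySet .euclidean S)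
    (hcN : ∀ t ∈ Icc a b, deriv c t ∈ Nul S (c t)) :
    (Nul S (c b)).starProjection = (Nul S (c a)).starProjection ∧
    (TangentAt S (c b)).starProjection = (TangentAt S (c a)).starProjection := by
  have key : ∀ t ∈ Icc a b,
      HasDerivWithinAt (fun s => (Nul S (c s)).starProjection) 0 (Icc a b) t ∧
      HasDerivWithinAt (fun s => (TangentAt S (c s)).starProjection) 0 (Icc a b) t := by
    intro t ht
    obtain ⟨R, P, N, O, hxO, h⟩ := exists_locN hsub (hcA t ht)
    have hxS : c t ∈ S := (hcA t ht).1
    have hev : ∀ᶠ s in 𝓝[Icc a b] t, c s ∈ S ∧ c s ∈ O := by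
      filter_upwards [self_mem_nhdsWithin, mem_nhdsWithin_of_mem_nhds
        ((hc t).continuousAt.preimage_mem_nhds (h.isOpen.mem_nhds hxO))] with s hs hsO
      exact ⟨(hcA s hs).1, hsO⟩
    constructor
    · have h1 := (h.hasFDerivAtN hxO).comp_hasDerivAt t (hc t).hasDerivAt
      rw [h.dN_zero hxS hxO (hcN t ht)] at h1
      refine h1.hasDerivWithinAt.congr_of_eventuallyEq ?_ (h.N_eq _ hxS hxO).symm
      filter_upwards [hev] with s hs
      exact (h.N_eq _ hs.1 hs.2).symm
    · have h1 := (h.toLoc.hasFDerivAtP hxO).comp_hasDerivAt t (hc t).hasDerivAt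
      rw [((h.toLoc.mem_Nul hxS hxO).1 (hcN t ht)).2] at h1
      refine h1.hasDerivWithinAt.congr_of_eventuallyEq ?_ (h.P_eq _ hxS hxO).symm
      filter_upwards [hev] with s hs
      exact (h.P_eq _ hs.1 hs.2).symm
  have aux : ∀ f : ℝ → Eu D →L[ℝ] Eu D, (∀ t ∈ Icc a b, HasDerivWithinAt f 0 (Icc a b) t) → f b = f a := by
    intro f hf
    refine constant_of_has_deriv_right_zero (a := a) (b := b) (fun t ht => (hf t ht).continuousWithinAt)
      (fun t ht => ?_) b ⟨hab, le_rfl⟩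
    have h1 := hf t ⟨ht.1, ht.2.le⟩
    exact h1.mono_of_mem_nhdsWithin (by
      filter_upwards [Icc_mem_nhdsGE ht.2] with s hs using ⟨ht.1.trans hs.1, hs.2⟩)
  exact ⟨aux _ fun t ht => (key t ht).1, aux _ fun t ht => (key t ht).2⟩

theorem aForm_euclidean (x y : Eu D) : aForm .euclidean x y = inner ℝ x y := by
  simp [aForm, formSign, PiLp.inner_apply, mul_comm]

/-- Geodesics of `S` starting tangent to the nullity are locally straight lines. -/
theorem geod_local (hsub : IsSubmanifold S m) {η : ℝ → Eu D} (hη : IsGeodesicOn .euclidean S η) {s0 : ℝ}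
    (hA : η s0 ∈ minNullitySet .euclidean S) (hN : deriv η s0 ∈ Nul S (η s0)) :
    ∃ δ > 0, ∀ s ∈ Icc s0 (s0 + δ), deriv η s = deriv η s0 ∧ deriv η s ∈ Nul S (η s) := by
  obtain ⟨R, P, N, O, hxO, h⟩ := exists_locN hsub hA
  have hd : Differentiable ℝ η := hη.smooth.differentiable (by simp)
  have hd1 : ContDiff ℝ ∞ (deriv η) := (contDiff_infty_iff_deriv.1 hη.smooth).2
  have hdd : Differentiable ℝ (deriv η) := hd1.differentiable (by simp)
  have hd2 : Continuous (deriv (deriv η)) := hd1.continuous_deriv (by simp)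
  obtain ⟨ε, hε, hball⟩ := Metric.isOpen_iff.1 (h.isOpen.preimage hd.continuous) s0 hxO
  have hO : ∀ s ∈ Icc s0 (s0 + ε / 2), η s ∈ O := by
    intro s hs
    apply hball
    rw [Metric.mem_ball, Real.dist_eq, abs_of_nonneg (by linarith [hs.1])]
    linarith [hs.2]
  refine ⟨ε / 2, by positivity, ?_⟩
  have hPd : ∀ s ∈ Icc s0 (s0 + ε / 2), HasDerivAt (fun s => P (η s)) (fderiv ℝ P (η s) (deriv η s)) s :=
    fun s hs => (h.toLoc.hasFDerivAtP (hO s hs)).comp_hasDerivAt s (hd s).hasDerivAt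
  have hNd : ∀ s ∈ Icc s0 (s0 + ε / 2), HasDerivAt (fun s => N (η s)) (fderiv ℝ N (η s) (deriv η s)) s :=
    fun s hs => (h.hasFDerivAtN (hO s hs)).comp_hasDerivAt s (hd s).hasDerivAt
  have hT : ∀ s ∈ Icc s0 (s0 + ε / 2), deriv η s ∈ TangentAt S (η s) := fun s hs =>
    h.velocity_mem (hη.mem s) (hO s hs) (hd s).hasDerivAt (Filter.Eventually.of_forall hη.mem) rfl
  -- geodesic equation
  have hgeo : ∀ s ∈ Icc s0 (s0 + ε / 2), deriv (deriv η) s = fderiv ℝ P (η s) (deriv η s) (deriv η s) := by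
    intro s hs
    have h1 := (hPd s hs).clm_apply (hdd s).hasDerivAt
    have h2 : HasDerivAt (fun s => P (η s) (deriv η s)) (deriv (deriv η) s) s := by
      refine (hdd s).hasDerivAt.congr_of_eventuallyEq ?_
      filter_upwards [hd.continuous.continuousAt.preimage_mem_nhds (h.isOpen.mem_nhds (hO s hs))] with t ht
      exact (h.toLoc.P_iff (hη.mem t) ht).2 (h.velocity_mem (hη.mem t) ht (hd t).hasDerivAt
        (Filter.Eventually.of_forall hη.mem) rfl)
    have h3 := h1.unique h2
    have h4 : P (η s) (deriv (deriv η) s) = 0 := by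
      have h5 := hη.accel_normal s _ (h.toLoc.P_mem (hη.mem s) (hO s hs) (P (η s) (deriv (deriv η) s)))
      rw [aForm_euclidean, h.P_eq _ (hη.mem s) (hO s hs), ← Submodule.inner_starProjection_left_eq_right] at h5
      rw [h.P_eq _ (hη.mem s) (hO s hs)]
      simpa using h5
    rw [h4, add_zero] at h3
    exact h3.symm
  let w : ℝ → Eu D := fun s => deriv η s - N (η s) (deriv η s)
  have hwd : ∀ s ∈ Icc s0 (s0 + ε / 2), HasDerivAt w (fderiv ℝ P (η s) (w s) (deriv η s) -
      (fderiv ℝ N (η s) (w s) (deriv η s) + N (η s) (fderiv ℝ P (η s) (w s) (deriv η s)))) s := by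
    intro s hs
    have h1 := (hdd s).hasDerivAt.sub ((hNd s hs).clm_apply (hdd s).hasDerivAt)
    have hnN := h.N_mem (hη.mem s) (hO s hs) (deriv η s)
    have e1 : fderiv ℝ P (η s) (w s) = fderiv ℝ P (η s) (deriv η s) := by
      simp only [w, map_sub, ((h.toLoc.mem_Nul (hη.mem s) (hO s hs)).1 hnN).2, sub_zero]
    have e2 : fderiv ℝ N (η s) (w s) = fderiv ℝ N (η s) (deriv η s) := by
      simp only [w, map_sub, h.dN_zero (hη.mem s) (hO s hs) hnN, sub_zero]
    rw [e1, e2]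
    rw [hgeo s hs] at h1
    exact h1
  have hηc : ContinuousOn η (Icc s0 (s0 + ε / 2)) := hd.continuous.continuousOn
  have cP : ContinuousOn (fun s => fderiv ℝ P (η s)) (Icc s0 (s0 + ε / 2)) :=
    (h.smoothP.continuousOn_fderiv_of_isOpen h.isOpen (by simp)).comp hηc hO
  have cN : ContinuousOn (fun s => fderiv ℝ N (η s)) (Icc s0 (s0 + ε / 2)) :=
    (h.smoothN.continuousOn_fderiv_of_isOpen h.isOpen (by simp)).comp hηc hO
  have cN0 : ContinuousOn (fun s => N (η s)) (Icc s0 (s0 + ε / 2)) := h.smoothN.continuousOn.comp hηc hO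
  have cd : ContinuousOn (deriv η) (Icc s0 (s0 + ε / 2)) := hdd.continuous.continuousOn
  have cPn : ContinuousOn (fun s => ‖fderiv ℝ P (η s)‖) (Icc s0 (s0 + ε / 2)) :=
    (continuous_norm (E := Eu D →L[ℝ] Eu D →L[ℝ] Eu D)).comp_continuousOn cP
  have cNn : ContinuousOn (fun s => ‖fderiv ℝ N (η s)‖) (Icc s0 (s0 + ε / 2)) :=
    (continuous_norm (E := Eu D →L[ℝ] Eu D →L[ℝ] Eu D)).comp_continuousOn cN
  have cN0n : ContinuousOn (fun s => ‖N (η s)‖) (Icc s0 (s0 + ε / 2)) :=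
    continuous_norm.comp_continuousOn cN0
  have cdn : ContinuousOn (fun s => ‖deriv η s‖) (Icc s0 (s0 + ε / 2)) :=
    continuous_norm.comp_continuousOn cd
  obtain ⟨K, hK⟩ := isCompact_Icc.exists_bound_of_continuousOn
    (((cPn.mul cdn).add (cNn.mul cdn)).add (cN0n.mul (cPn.mul cdn)))
  have hw0 : ∀ s ∈ Icc s0 (s0 + ε / 2), w s = 0 := by
    apply eq_zero_of_abs_deriv_le_mul_abs_self_of_eq_zero_right (K := K)
      (f' := fun s => fderiv ℝ P (η s) (w s) (deriv η s) -
      (fderiv ℝ N (η s) (w s) (deriv η s) + N (η s) (fderiv ℝ P (η s) (w s) (deriv η s))))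
    · exact fun s hs => (hwd s hs).continuousAt.continuousWithinAt
    · exact fun s hs => (hwd s ⟨hs.1, hs.2.le⟩).hasDerivWithinAt
    · simp only [w, sub_eq_zero]
      exact ((h.N_iff hA.1 hxO).2 hN).symm
    · intro s hs
      have hK' := (le_abs_self _).trans (hK s ⟨hs.1, hs.2.le⟩)
      have b1 : ‖fderiv ℝ P (η s) (w s) (deriv η s)‖ ≤ ‖fderiv ℝ P (η s)‖ * ‖w s‖ * ‖deriv η s‖ :=
        ContinuousLinearMap.le_opNorm₂ _ _ _
      have b2 : ‖fderiv ℝ N (η s) (w s) (deriv η s)‖ ≤ ‖fderiv ℝ N (η s)‖ * ‖w s‖ * ‖deriv η s‖ :=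
        ContinuousLinearMap.le_opNorm₂ _ _ _
      have b3 : ‖N (η s) (fderiv ℝ P (η s) (w s) (deriv η s))‖ ≤
          ‖N (η s)‖ * (‖fderiv ℝ P (η s)‖ * ‖w s‖ * ‖deriv η s‖) :=
        (ContinuousLinearMap.le_opNorm _ _).trans (by gcongr)
      refine (norm_sub_le _ _).trans ?_
      refine (add_le_add b1 ((norm_add_le _ _).trans (add_le_add b2 b3))).trans ?_
      refine le_trans (le_of_eq ?_) (mul_le_mul_of_nonneg_right hK' (norm_nonneg (w s)))
      simp only [Pi.add_apply, Pi.mul_apply]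
      ring
  have hNul : ∀ s ∈ Icc s0 (s0 + ε / 2), deriv η s ∈ Nul S (η s) := fun s hs =>
    (h.N_iff (hη.mem s) (hO s hs)).1 (sub_eq_zero.1 (hw0 s hs)).symm
  intro s hs
  refine ⟨?_, hNul s hs⟩
  refine constant_of_has_deriv_right_zero (a := s0) (b := s0 + ε / 2) cd (fun t ht => ?_) s hs
  have ht' : t ∈ Icc s0 (s0 + ε / 2) := ⟨ht.1, ht.2.le⟩
  have h1 := (hdd t).hasDerivAt
  rw [hgeo t ht', ((h.toLoc.mem_Nul (hη.mem t) (hO t ht')).1 (hNul t ht')).2] at h1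
  exact h1.hasDerivWithinAt
end


section
variable {D m : ℕ} {S : Set (Eu D)}

theorem hasDerivAt_line (p v : Eu D) (t : ℝ) : HasDerivAt (fun s : ℝ => p + s • v) v t := by
  simpa using! ((hasDerivAt_id t).smul_const v).const_add p

/-- A geodesic starting tangent to the nullity is a straight line as long as the line stays in the
open set of minimal nullity. -/
theorem geod_line (hsub : IsSubmanifold S m) {O : Set (Eu D)}
    (hOA : ∀ x ∈ S, x ∈ minNullitySet .euclidean S ↔ x ∈ O)
    {η : ℝ → Eu D} (hη : IsGeodesicOn .euclidean S η) {p u : Eu D} (hp : η 0 = p) (hu : deriv η 0 = u)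
    (hN : u ∈ Nul S p) {t : ℝ} (hl : ∀ s ∈ Icc 0 t, p + s • u ∈ O) :
    ∀ s ∈ Icc 0 t, η s = p + s • u ∧ deriv η s = u ∧ u ∈ Nul S (η s) := by
  have hd : Differentiable ℝ η := hη.smooth.differentiable (by simp)
  have hd1 : ContDiff ℝ ∞ (deriv η) := (contDiff_infty_iff_deriv.1 hη.smooth).2
  let C1 : Set ℝ := {s | η s = p + s • u} ∩ {s | deriv η s = u} ∩ Icc 0 t
  have hC1 : IsClosed C1 :=
    ((isClosed_eq hd.continuous (by fun_prop)).inter (isClosed_eq hd1.continuous continuous_const)).inter isClosed_Icc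
  have hC1A : ∀ s ∈ C1, η s ∈ minNullitySet .euclidean S := by
    intro s hs
    refine (hOA _ (hη.mem s)).2 ?_
    rw [show η s = p + s • u from hs.1.1]
    exact hl s hs.2
  have hcont : ContinuousOn (fun s => (Nul S (η s)).starProjection u) C1 := by
    have h1 : ContinuousOn (fun s => (Nul S (η s)).starProjection) C1 :=
      (continuousOn_PN hsub).comp hd.continuous.continuousOn hC1A
    exact h1.clm_apply continuousOn_const
  have hC : IsClosed ({s | η s = p + s • u ∧ deriv η s = u ∧ u ∈ Nul S (η s)} ∩ Icc 0 t) := by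
    have h1 := hcont.preimage_isClosed_of_isClosed hC1 (isClosed_singleton (x := u))
    convert h1 using 1
    ext s
    simp only [C1, mem_inter_iff, mem_setOf_eq, mem_preimage, mem_singleton_iff,
      Submodule.starProjection_eq_self_iff]
    tauto
  have := hC.Icc_subset_of_forall_exists_gt (by simp [hp, hu, hN]) (by
    rintro s ⟨⟨hs1, hs2, hs3⟩, hs4⟩ y hy
    have hsA : η s ∈ minNullitySet .euclidean S := hC1A s ⟨⟨hs1, hs2⟩, hs4.1, hs4.2.le⟩
    obtain ⟨δ, hδ, hloc⟩ := geod_local hsub hη hsA (by rwa [hs2])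
    have hy' : s < y := hy
    have hr : min (s + δ) y ∈ Icc s (s + δ) := ⟨le_min (by linarith) hy'.le, min_le_left _ _⟩
    refine ⟨min (s + δ) y, ⟨?_, ?_, ?_⟩, lt_min (by linarith) hy', min_le_right _ _⟩
    · have hconst := constant_of_has_deriv_right_zero (a := s) (b := s + δ)
        (f := fun r => η r - (p + r • u)) (by
          have := hd.continuous
          fun_prop) (fun r hr => by
          have h1 := (hd r).hasDerivAt.sub (hasDerivAt_line p u r)
          rw [(hloc r ⟨hr.1, hr.2.le⟩).1, hs2, sub_self] at h1
          exact h1.hasDerivWithinAt) _ hr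
      simp only [hs1, sub_self] at hconst
      exact sub_eq_zero.1 hconst
    · rw [(hloc _ hr).1, hs2]
    · have := (hloc _ hr).2
      rwa [(hloc _ hr).1, hs2] at this)
  exact this

theorem finrank_aux {G : Type*} [NormedAddCommGroup G] [NormedSpace ℝ G]
    [FiniteDimensional ℝ G] {T K : Submodule ℝ (Eu D)} {B : Eu D →L[ℝ] G}
    (hK : ∀ v, v ∈ K ↔ v ∈ T ∧ B v = 0) :
    Module.finrank ℝ (LinearMap.range ((B : Eu D →ₗ[ℝ] G).domRestrict T)) + Module.finrank ℝ K = Module.finrank ℝ T := by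
  have h1 := LinearMap.finrank_range_add_finrank_ker ((B : Eu D →ₗ[ℝ] G).domRestrict T)
  have h2 : K = (LinearMap.ker ((B : Eu D →ₗ[ℝ] G).domRestrict T)).map T.subtype := by
    ext v
    rw [hK]
    constructor
    · rintro ⟨hv, hv0⟩
      exact ⟨⟨v, hv⟩, hv0, rfl⟩
    · rintro ⟨⟨v, hv⟩, hv0, rfl⟩
      exact ⟨hv, hv0⟩
  rw [h2, Submodule.finrank_map_subtype_eq]
  exact h1

theorem finrank_le_aux {G : Type*} [NormedAddCommGroup G] [NormedSpace ℝ G]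
    [FiniteDimensional ℝ G] {T T' K K' : Submodule ℝ (Eu D)} {B B' : Eu D →L[ℝ] G}
    (hT : T' = T) (hK : ∀ v, v ∈ K ↔ v ∈ T ∧ B v = 0) (hK' : ∀ v, v ∈ K' ↔ v ∈ T' ∧ B' v = 0)
    (hr : ∀ w ∈ T, ∃ J ∈ T', B' J = B w) : Module.finrank ℝ K' ≤ Module.finrank ℝ K := by
  subst hT
  have e1 := finrank_aux hK
  have e2 := finrank_aux hK'
  have e3 : LinearMap.range ((B : Eu D →ₗ[ℝ] G).domRestrict T') ≤
      LinearMap.range ((B' : Eu D →ₗ[ℝ] G).domRestrict T') := by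
    rintro _ ⟨⟨w, hw⟩, rfl⟩
    obtain ⟨J, hJ, hJ2⟩ := hr w hw
    exact ⟨⟨J, hJ⟩, hJ2⟩
  have e4 := Submodule.finrank_mono e3
  omega

/-- The minimal nullity set is closed along nullity lines. -/
theorem key_step (hsub : IsSubmanifold S m) (hcomplete : GeodComplete .euclidean S) {O : Set (Eu D)} (hO : IsOpen O)
    (hOA : ∀ x ∈ S, x ∈ minNullitySet .euclidean S ↔ x ∈ O) {p v : Eu D}
    (hp : p ∈ minNullitySet .euclidean S) (hv : v ∈ Nul S p) {b : ℝ} (hb : 0 < b)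
    (hl : ∀ s, 0 ≤ s → s < b → p + s • v ∈ O) : p + b • v ∈ O := by
  have hpS : p ∈ S := hp.1
  obtain ⟨η, hη, hη0, hη1⟩ := hcomplete p hpS v (mem_T_of_mem_Nul hsub hpS hv)
  have hline : ∀ s, 0 ≤ s → s < b → η s = p + s • v ∧ v ∈ Nul S (η s) := by
    intro s hs hsb
    have := geod_line hsub hOA hη hη0 hη1 hv (t := s) (fun r hr => hl r hr.1 (hr.2.trans_lt hsb)) s ⟨hs, le_rfl⟩
    exact ⟨this.1, this.2.2⟩
  have hlc : Continuous (fun s : ℝ => p + s • v) := by fun_prop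
  haveI : (𝓝[<] b).NeBot := inferInstance
  have hev0 : ∀ᶠ s in 𝓝[<] b, 0 < s ∧ s < b := by
    filter_upwards [Ioo_mem_nhdsLT hb] with s hs using hs
  have hqS : p + b • v ∈ S := by
    have h1 : Filter.Tendsto η (𝓝[<] b) (𝓝 (η b)) := hη.smooth.continuous.continuousAt.tendsto.mono_left nhdsWithin_le_nhds
    have h2 : Filter.Tendsto (fun s : ℝ => p + s • v) (𝓝[<] b) (𝓝 (p + b • v)) :=
      hlc.continuousAt.tendsto.mono_left nhdsWithin_le_nhds
    have h3 : η b = p + b • v := by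
      refine tendsto_nhds_unique (h1.congr' ?_) h2
      filter_upwards [hev0] with s hs using (hline s hs.1.le hs.2).1
    rw [← h3]; exact hη.mem b
  have hlS : ∀ s, 0 ≤ s → s < b → p + s • v ∈ S := fun s hs hsb => by
    rw [← (hline s hs hsb).1]; exact hη.mem s
  have hPTs : ∀ s, 0 ≤ s → s < b → (TangentAt S (p + s • v)).starProjection = (TangentAt S p).starProjection := by
    intro s hs hsb
    have := (const_along hsub (c := fun s => p + s • v) hs (fun t => (hasDerivAt_line p v t).differentiableAt)
      (fun t ht => (hOA _ (hlS t ht.1 (ht.2.trans_lt hsb))).2 (hl t ht.1 (ht.2.trans_lt hsb)))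
      (fun t ht => by
        rw [(hasDerivAt_line p v t).deriv]
        have := (hline t ht.1 (ht.2.trans_lt hsb))
        rw [this.1] at this
        exact this.2)).2
    simpa using this
  obtain ⟨R, P, O1, hqO1, h⟩ := exists_loc hsub hqS
  obtain ⟨R0, P0, N0, O0, hpO0, h0⟩ := exists_locN hsub hp
  have hev1 : ∀ᶠ s in 𝓝[<] b, p + s • v ∈ O1 :=
    nhdsWithin_le_nhds (hlc.continuousAt.preimage_mem_nhds (h.isOpen.mem_nhds hqO1))
  have hTq : TangentAt S (p + b • v) = TangentAt S p := by
    apply Submodule.starProjection_inj.1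
    rw [← h.P_eq _ hqS hqO1]
    have h1 : Filter.Tendsto (fun s : ℝ => P (p + s • v)) (𝓝[<] b) (𝓝 (P (p + b • v))) := by
      have : ContinuousAt (fun s : ℝ => P (p + s • v)) b :=
        ContinuousAt.comp (g := P) (h.hasFDerivAtP hqO1).continuousAt hlc.continuousAt
      exact this.tendsto.mono_left nhdsWithin_le_nhds
    refine tendsto_nhds_unique (h1.congr' ?_) tendsto_const_nhds
    filter_upwards [hev0, hev1] with s hs hs1
    rw [h.P_eq _ (hlS s hs.1.le hs.2) hs1, hPTs s hs.1.le hs.2]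
  have claim : ∀ w ∈ TangentAt S p, ∃ J ∈ TangentAt S (p + b • v), fderiv ℝ P (p + b • v) J = fderiv ℝ P0 p w := by
    intro w hw
    obtain ⟨y, hy, hyS, hy0, hyd⟩ := h0.exists_curve hpS hpO0 w
    rw [(h0.tangent_iff hpS hpO0).1 hw] at hyd
    let V : ℝ → Eu D := fun τ => N0 (y τ) v
    have hVc : Continuous V := by
      have : Continuous (fun τ => N0 (y τ)) :=
        h0.smoothN.continuousOn.comp_continuous hy.continuous (fun τ => (hyS τ).2)
      exact this.clm_apply continuous_const
    have hV0 : V 0 = v := by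
      show N0 (y 0) v = v
      rw [hy0]; exact (h0.N_iff hpS hpO0).2 hv
    have hVN : ∀ τ, V τ ∈ Nul S (y τ) := fun τ => h0.N_mem (hyS τ).1 (hyS τ).2 v
    have hVd : HasDerivAt V (fderiv ℝ N0 p w v) 0 := by
      have h1 : HasDerivAt (fun τ => N0 (y τ)) (fderiv ℝ N0 p w) 0 := by
        have := h0.hasFDerivAtN hpO0
        rw [← hy0] at this ⊢
        exact this.comp_hasDerivAt 0 hyd
      simpa using h1.clm_apply (hasDerivAt_const (0:ℝ) v)
    set K := fderiv ℝ N0 p w v with hK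
    have hP0y : HasDerivAt (fun τ => P0 (y τ)) (fderiv ℝ P0 p w) 0 := by
      have := h0.toLoc.hasFDerivAtP hpO0
      rw [← hy0] at this ⊢
      exact this.comp_hasDerivAt 0 hyd
    have hmain : ∀ t, 0 < t → t < b → p + t • v ∈ O1 →
        w + t • K ∈ TangentAt S p ∧ fderiv ℝ P (p + t • v) (w + t • K) = fderiv ℝ P0 p w := by
      intro t ht htb htO1
      have hev : ∀ᶠ τ in 𝓝 (0:ℝ), ∀ s ∈ Icc 0 t, y τ + s • V τ ∈ O := by
        apply isCompact_Icc.eventually_forall_of_forall_eventually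
        intro s hs
        have hc : Continuous (fun z : ℝ × ℝ => y z.1 + z.2 • V z.1) := by
          have := hy.continuous
          fun_prop
        apply hc.continuousAt.preimage_mem_nhds
        apply hO.mem_nhds
        simp only [hy0, hV0]
        exact hl s hs.1 (hs.2.trans_lt htb)
      have hz : ∀ᶠ τ in 𝓝 (0:ℝ), y τ + t • V τ ∈ S ∧
          (TangentAt S (y τ + t • V τ)).starProjection = (TangentAt S (y τ)).starProjection := by
        filter_upwards [hev] with τ hτ
        obtain ⟨ζ, hζ, hζ0, hζ1⟩ := hcomplete (y τ) (hyS τ).1 (V τ) (mem_T_of_mem_Nul hsub (hyS τ).1 (hVN τ))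
        have hg := geod_line hsub hOA hζ hζ0 hζ1 (hVN τ) hτ
        have hgS : ∀ s ∈ Icc 0 t, y τ + s • V τ ∈ S := fun s hs => by
          rw [← (hg s hs).1]; exact hζ.mem s
        refine ⟨hgS t ⟨ht.le, le_rfl⟩, ?_⟩
        have := (const_along hsub (c := fun s => y τ + s • V τ) ht.le
          (fun s => (hasDerivAt_line _ _ s).differentiableAt)
          (fun s hs => (hOA _ (hgS s hs)).2 (hτ s hs))
          (fun s hs => by
            rw [(hasDerivAt_line _ _ s).deriv]
            have := hg s hs
            rw [this.1] at this
            exact this.2.2)).2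
        simpa using this
      have hzd : HasDerivAt (fun τ => y τ + t • V τ) (w + t • K) 0 := hyd.add (hVd.const_smul t)
      have hz0 : y 0 + t • V 0 = p + t • v := by rw [hy0, hV0]
      have hT := h.velocity_mem (hlS t ht.le htb) htO1 hzd (hz.mono fun _ h => h.1) hz0
      have hTeq : TangentAt S (p + t • v) = TangentAt S p := Submodule.starProjection_inj.1 (hPTs t ht.le htb)
      refine ⟨hTeq ▸ hT, ?_⟩
      have h1 : HasDerivAt (fun τ => P (y τ + t • V τ)) (fderiv ℝ P (p + t • v) (w + t • K)) 0 := by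
        have := h.hasFDerivAtP htO1
        rw [← hz0] at this ⊢
        exact this.comp_hasDerivAt 0 hzd
      refine h1.unique (hP0y.congr_of_eventuallyEq ?_)
      filter_upwards [hz, hzd.continuousAt.preimage_mem_nhds (h.isOpen.mem_nhds (by rwa [hz0]))] with τ hτ hτ1
      rw [h.P_eq _ hτ.1 hτ1, hτ.2, h0.P_eq _ (hyS τ).1 (hyS τ).2]
    have hJc : Continuous (fun t : ℝ => w + t • K) := by fun_prop
    have hJt : Filter.Tendsto (fun t : ℝ => w + t • K) (𝓝[<] b) (𝓝 (w + b • K)) :=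
      hJc.continuousAt.tendsto.mono_left nhdsWithin_le_nhds
    refine ⟨w + b • K, ?_, ?_⟩
    · rw [hTq]
      refine (Submodule.closed_of_finiteDimensional (TangentAt S p)).mem_of_tendsto hJt ?_
      filter_upwards [hev0, hev1] with t ht ht1
      exact (hmain t ht.1 ht.2 ht1).1
    · have hc1 : ContinuousAt (fun t : ℝ => fderiv ℝ P (p + t • v)) b :=
        ContinuousAt.comp (g := fderiv ℝ P) ((h.smoothP.continuousOn_fderiv_of_isOpen h.isOpen (by simp)).continuousAt
          (h.isOpen.mem_nhds hqO1)) hlc.continuousAt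
      have hc2 : ContinuousAt (fun t : ℝ => fderiv ℝ P (p + t • v) (w + t • K)) b :=
        hc1.clm_apply hJc.continuousAt
      have h1 : Filter.Tendsto (fun t : ℝ => fderiv ℝ P (p + t • v) (w + t • K)) (𝓝[<] b)
          (𝓝 (fderiv ℝ P (p + b • v) (w + b • K))) := hc2.tendsto.mono_left nhdsWithin_le_nhds
      refine tendsto_nhds_unique (h1.congr' ?_) tendsto_const_nhds
      filter_upwards [hev0, hev1] with t ht ht1
      exact (hmain t ht.1 ht.2 ht1).2
  have hle : Module.finrank ℝ (Nul S (p + b • v)) ≤ Module.finrank ℝ (Nul S p) := by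
    exact finrank_le_aux hTq (fun v => h0.toLoc.mem_Nul hpS hpO0) (fun v => h.mem_Nul hqS hqO1) claim
  exact (hOA _ hqS).1 (mem_A_iff.2 ⟨hqS, fun r hr => hle.trans ((mem_A_iff.1 hp).2 r hr)⟩)

theorem ray (hsub : IsSubmanifold S m) (hcomplete : GeodComplete .euclidean S) {p v : Eu D}
    (hp : p ∈ minNullitySet .euclidean S) (hv : v ∈ Nul S p) {t : ℝ} (ht : 0 ≤ t) :
    p + t • v ∈ minNullitySet .euclidean S ∧ v ∈ Nul S (p + t • v) := by
  obtain ⟨O, hO, hOA⟩ := isOpen_A hsub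
  have hlc : Continuous (fun s : ℝ => p + s • v) := by fun_prop
  have hall : ∀ s : ℝ, 0 ≤ s → p + s • v ∈ O := by
    by_contra! hcon
    let B : Set ℝ := Ici 0 ∩ (fun s : ℝ => p + s • v) ⁻¹' Oᶜ
    have hB : IsClosed B := isClosed_Ici.inter (hO.isClosed_compl.preimage hlc)
    have hBne : B.Nonempty := by
      obtain ⟨s, hs, hs2⟩ := hcon; exact ⟨s, hs, hs2⟩
    have hBb : BddBelow B := ⟨0, fun s hs => hs.1⟩
    have hmem := hB.csInf_mem hBne hBb
    have hpos : 0 < sInf B := by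
      refine lt_of_le_of_ne hmem.1 fun h0 => hmem.2 ?_
      rw [← h0]
      simpa using (hOA p hp.1).1 hp
    refine hmem.2 (key_step hsub hcomplete hO hOA hp hv hpos fun s hs hsb => ?_)
    by_contra hsO
    exact notMem_of_lt_csInf hsb hBb ⟨hs, hsO⟩
  obtain ⟨η, hη, hη0, hη1⟩ := hcomplete p hp.1 v (mem_T_of_mem_Nul hsub hp.1 hv)
  obtain ⟨h1, _, h3⟩ := geod_line hsub hOA hη hη0 hη1 hv (t := t) (fun r hr => hall r hr.1) t ⟨ht, le_rfl⟩
  rw [← h1]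
  refine ⟨(hOA _ (hη.mem t)).2 ?_, h3⟩
  rw [h1]; exact hall t ht

theorem full_line (hsub : IsSubmanifold S m) (hcomplete : GeodComplete .euclidean S) {p v : Eu D}
    (hp : p ∈ minNullitySet .euclidean S) (hv : v ∈ Nul S p) (t : ℝ) :
    p + t • v ∈ minNullitySet .euclidean S ∧ v ∈ Nul S (p + t • v) := by
  rcases le_total 0 t with ht | ht
  · exact ray hsub hcomplete hp hv ht
  · have := ray hsub hcomplete hp (neg_mem hv) (t := -t) (by linarith)
    rw [neg_smul_neg] at this
    exact ⟨this.1, by simpa using neg_mem this.2⟩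

theorem leaf_subset (hsub : IsSubmanifold S m) {c : ℝ → Eu D} (hc : Differentiable ℝ c)
    (hcA : ∀ t, c t ∈ minNullitySet .euclidean S) (hcN : ∀ t, deriv c t ∈ Nul S (c t)) :
    c 1 - c 0 ∈ Nul S (c 0) := by
  set Q := (Nul S (c 0)).starProjection with hQ
  have h1 : ∀ t, 0 ≤ t → Q (deriv c t) = deriv c t := by
    intro t ht
    rw [hQ, ← (const_along hsub ht hc (fun s _ => hcA s) (fun s _ => hcN s)).1]
    exact Submodule.starProjection_eq_self_iff.2 (hcN t)
  have h2 := constant_of_has_deriv_right_zero (a := 0) (b := 1) (f := fun t => c t - Q (c t)) (by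
      have := hc.continuous
      fun_prop) (fun t ht => by
      have h3 := (hc t).hasDerivAt.sub (Q.hasFDerivAt.comp_hasDerivAt t (hc t).hasDerivAt)
      rw [h1 t ht.1, sub_self] at h3
      exact h3.hasDerivWithinAt) 1 ⟨zero_le_one, le_rfl⟩
  apply Submodule.starProjection_eq_self_iff.1
  rw [← hQ, map_sub]
  have h4 : c 1 - Q (c 1) = c 0 - Q (c 0) := h2
  rw [sub_eq_sub_iff_add_eq_add] at h4 ⊢
  rw [add_comm, add_comm (c 1)] at *
  exact h4.symm
end

theorem main_thm (n codim : ℕ)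
    (S : Set (EuclideanSpace ℝ (Fin (n + codim))))
    (hsub : IsSubmanifold S n)
    (hcomplete : GeodComplete .euclidean S)
    (p : EuclideanSpace ℝ (Fin (n + codim)))
    (hp : p ∈ minNullitySet .euclidean S) :
    leafThrough .euclidean S (minNullitySet .euclidean S) p
        = {q | q - p ∈ Submodule.span ℝ (nullityAt .euclidean S p)} ∧
      {q | q - p ∈ Submodule.span ℝ (nullityAt .euclidean S p)} ⊆ S := by
  refine ⟨Subset.antisymm ?_ ?_, ?_⟩
  · rintro q ⟨c, hc, hcA, hcN, hc0, hc1⟩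
    have := leaf_subset hsub (hc.differentiable (by simp)) hcA
      (fun t => (mem_Nul_iff hsub (hcA t).1).2 (hcN t))
    rw [hc0, hc1] at this
    exact this
  · intro q hq
    have hv : q - p ∈ Nul S p := hq
    refine ⟨fun t => p + t • (q - p), by fun_prop, fun t => (full_line hsub hcomplete hp hv t).1, fun t => ?_,
      by simp, by simp⟩
    rw [(hasDerivAt_line p (q - p) t).deriv]
    have := full_line hsub hcomplete hp hv t
    exact (mem_Nul_iff hsub this.1.1).1 this.2
  · intro q hq
    have hv : q - p ∈ Nul S p := hq
    have := (full_line hsub hcomplete hp hv 1).1.1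
    simpa using this

/-- **Nullity leaves of complete Euclidean submanifolds are affine subspaces.**
Let `M = S` be a complete Riemannian manifold isometrically immersed as an `n`-dimensional
submanifold of `ℝ^{n+k}`, with nullity distribution `𝒩`, and let `p` be a point of minimal index
of nullity `μ`.  Then the maximal integral manifold of `𝒩` through `p` is an open subset of the
affine subspace `p + 𝒩_p` which, being complete, is the whole affine subspace; in particular `M`
contains the full `μ`-dimensional affine subspace `p + 𝒩_p`. -/
theorem nullity_leaf_eq_affine_subspace (n codim : ℕ)
    (S : Set (EuclideanSpace ℝ (Fin (n + codim))))
    (hsub : IsSubmanifold S n)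
    (hcomplete : GeodComplete .euclidean S)
    (p : EuclideanSpace ℝ (Fin (n + codim)))
    (hp : p ∈ minNullitySet .euclidean S) :
    leafThrough .euclidean S (minNullitySet .euclidean S) p
        = {q | q - p ∈ Submodule.span ℝ (nullityAt .euclidean S p)} ∧
      {q | q - p ∈ Submodule.span ℝ (nullityAt .euclidean S p)} ⊆ S := by
  exact main_thm n codim S hsub hcomplete p hp
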